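/- Let n ≥ 1 be an integer and let σ be the ℝ-algebra automorphism of the polynomial ring ℝ[s,t] induced by the linear rotation ρ_{2π/n}, i.e. σ(s) = s·cos(2π/n) + t·sin(2π/n) and σ(t) = −s·sin(2π/n) + t·cos(2π/n). Then the subalgebra of σ-invariant polynomials {f ∈ ℝ[s,t] : σ(f) = f} equals the ℝ-subalgebra of ℝ[s,t] generated by the three polynomials x_n, y_n and s² + t². -/

import Mathlib

/-!
The argument stays over `ℝ` and uses the fixed-point projection in the form
`ℝ[s,t] = A + range (σ - 1)`, where `σ` is the rotation, `A` is the algebra generated by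
`x_n`, `y_n` and `z = s² + t²`.

* Since `x_m + i y_m = (s + i t) ^ m`, the products `z ^ k x_m` and `z ^ k y_m` span `ℝ[s,t]`: their
  span contains `1` and is stable under multiplication by `s` and `t`, because
  `2 s x_{m+1} = x_{m+2} + z x_m` and similarly for the other products (`mem_polarSpan`).
* The plane spanned by `z ^ k x_m`, `z ^ k y_m` is rotated by `σ` through the angle `2πm/n`. If
  `n ∣ m`, then `x_m` and `y_m` are polynomials in `x_n`, `y_n`; otherwise `σ - 1` is invertible on
  this plane. This gives the decomposition (`exists_decomp`).
* If `f = g + (σ h - h)` is fixed by `σ` and `g ∈ A`, then summing `σ ^ k f` over `k < n` telescopes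
  to `n f = n g + (σ ^ n h - h) = n g`, since `σ ^ n = 1`. Hence `f = g ∈ A`.
-/

open Real MvPolynomial

/-- `x_n` as a polynomial in `ℝ[s,t]` (variable `0` is `s`, variable `1` is `t`). -/
noncomputable def XnPoly (n : ℕ) : MvPolynomial (Fin 2) ℝ :=
  ∑ j ∈ Finset.range (n / 2 + 1),
    C ((-1 : ℝ) ^ j * (n.choose (2 * j) : ℝ)) * X 1 ^ (2 * j) * X 0 ^ (n - 2 * j)

/-- `y_n` as a polynomial in `ℝ[s,t]`. -/
noncomputable def YnPoly (n : ℕ) : MvPolynomial (Fin 2) ℝ :=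
  ∑ j ∈ Finset.range ((n + 1) / 2),
    C ((-1 : ℝ) ^ j * (n.choose (2 * j + 1) : ℝ)) * X 1 ^ (2 * j + 1) * X 0 ^ (n - 2 * j - 1)

/-- The ℝ-algebra endomorphism of `ℝ[s,t]` induced by the rotation `ρ_{2π/n}`:
`σ(s) = s cos(2π/n) + t sin(2π/n)`, `σ(t) = −s sin(2π/n) + t cos(2π/n)`. -/
noncomputable def rotAut (n : ℕ) : MvPolynomial (Fin 2) ℝ →ₐ[ℝ] MvPolynomial (Fin 2) ℝ :=
  aeval ![C (Real.cos (2 * π / n)) * X 0 + C (Real.sin (2 * π / n)) * X 1,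
          - C (Real.sin (2 * π / n)) * X 0 + C (Real.cos (2 * π / n)) * X 1]

lemma sum_range_even_odd {M : Type*} [AddCommMonoid M] (f : ℕ → M) (N : ℕ) :
    ∑ k ∈ Finset.range N, f k =
      ∑ j ∈ Finset.range ((N + 1) / 2), f (2 * j) + ∑ j ∈ Finset.range (N / 2), f (2 * j + 1) := by
  induction N with
  | zero => simp
  | succ N ih =>
    rw [Finset.sum_range_succ, ih]
    rcases Nat.even_or_odd' N with ⟨k, rfl | rfl⟩
    · rw [show (2 * k + 1 + 1) / 2 = k + 1 by omega, show (2 * k + 1) / 2 = k by omega,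
        show 2 * k / 2 = k by omega, Finset.sum_range_succ]
      exact add_right_comm _ _ _
    · rw [show (2 * k + 1 + 1 + 1) / 2 = k + 1 by omega, show (2 * k + 1 + 1) / 2 = k + 1 by omega,
        show (2 * k + 1) / 2 = k by omega, Finset.sum_range_succ (fun j => f (2 * j + 1)) k]
      exact add_assoc _ _ _

/-- The identity `x_n + i y_n = (s + i t) ^ n`, evaluated at a real point. -/
lemma eval_XnPoly_add_YnPoly (v : Fin 2 → ℝ) (n : ℕ) :
    ((eval v (XnPoly n) : ℝ) : ℂ) + ((eval v (YnPoly n) : ℝ) : ℂ) * Complex.I =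
      ((v 0 : ℂ) + (v 1 : ℂ) * Complex.I) ^ n := by
  rw [add_comm (v 0 : ℂ), add_pow, sum_range_even_odd, show (n + 1 + 1) / 2 = n / 2 + 1 by omega]
  have hI : ∀ j : ℕ, Complex.I ^ (2 * j) = (-1) ^ j := fun j => by rw [pow_mul, Complex.I_sq]
  simp only [XnPoly, YnPoly, map_sum, map_mul, map_pow, eval_C, eval_X]
  push_cast
  rw [Finset.sum_mul]
  congr 1
  · refine Finset.sum_congr rfl fun j _ => ?_
    rw [mul_pow, hI]
    ring
  · refine Finset.sum_congr rfl fun j _ => ?_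
    rw [mul_pow, pow_succ Complex.I, hI, Nat.sub_sub]
    ring

lemma eval_XnPoly (v : Fin 2 → ℝ) (n : ℕ) :
    eval v (XnPoly n) = (((v 0 : ℂ) + (v 1 : ℂ) * Complex.I) ^ n).re := by
  rw [← eval_XnPoly_add_YnPoly]; simp

lemma eval_YnPoly (v : Fin 2 → ℝ) (n : ℕ) :
    eval v (YnPoly n) = (((v 0 : ℂ) + (v 1 : ℂ) * Complex.I) ^ n).im := by
  rw [← eval_XnPoly_add_YnPoly]; simp

lemma XnPoly_add (a b : ℕ) :
    XnPoly (a + b) = XnPoly a * XnPoly b - YnPoly a * YnPoly b := by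
  refine MvPolynomial.funext fun v => ?_
  simp only [map_sub, map_mul, eval_XnPoly, eval_YnPoly, pow_add, Complex.mul_re]

lemma YnPoly_add (a b : ℕ) :
    YnPoly (a + b) = XnPoly a * YnPoly b + YnPoly a * XnPoly b := by
  refine MvPolynomial.funext fun v => ?_
  simp only [map_add, map_mul, eval_XnPoly, eval_YnPoly, pow_add, Complex.mul_im]

lemma XnPoly_zero : XnPoly 0 = 1 := by simp [XnPoly]

lemma YnPoly_zero : YnPoly 0 = 0 := by simp [YnPoly]

lemma XnPoly_one : XnPoly 1 = X 0 := by simp [XnPoly]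

lemma YnPoly_one : YnPoly 1 = X 1 := by simp [YnPoly]

lemma XnPoly_succ (m : ℕ) : XnPoly (m + 1) = XnPoly m * X 0 - YnPoly m * X 1 := by
  rw [XnPoly_add, XnPoly_one, YnPoly_one]

lemma YnPoly_succ (m : ℕ) : YnPoly (m + 1) = XnPoly m * X 1 + YnPoly m * X 0 := by
  rw [YnPoly_add, XnPoly_one, YnPoly_one]

/-- The real span of the polynomials `(s² + t²) ^ k x_m` and `(s² + t²) ^ k y_m`. -/
noncomputable def polarSpan : Submodule ℝ (MvPolynomial (Fin 2) ℝ) :=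
  Submodule.span ℝ
    {p | ∃ k m : ℕ, p = (X 0 ^ 2 + X 1 ^ 2) ^ k * XnPoly m ∨
      p = (X 0 ^ 2 + X 1 ^ 2) ^ k * YnPoly m}

lemma polar_x_mem (k m : ℕ) : (X 0 ^ 2 + X 1 ^ 2) ^ k * XnPoly m ∈ polarSpan :=
  Submodule.subset_span ⟨k, m, Or.inl rfl⟩

lemma polar_y_mem (k m : ℕ) : (X 0 ^ 2 + X 1 ^ 2) ^ k * YnPoly m ∈ polarSpan :=
  Submodule.subset_span ⟨k, m, Or.inr rfl⟩

lemma mem_polarSpan_of_two_mul {p : MvPolynomial (Fin 2) ℝ} (h : 2 * p ∈ polarSpan) :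
    p ∈ polarSpan := by
  have h2 : p = (2⁻¹ : ℝ) • (2 * p) := by
    rw [two_mul, ← two_smul ℝ p, smul_smul]; norm_num
  rw [h2]
  exact polarSpan.smul_mem _ h

lemma polar_mul_X_mem (k m : ℕ) (i : Fin 2) :
    (X 0 ^ 2 + X 1 ^ 2) ^ k * XnPoly m * X i ∈ polarSpan ∧
      (X 0 ^ 2 + X 1 ^ 2) ^ k * YnPoly m * X i ∈ polarSpan := by
  rcases m with _ | m
  · have hx := polar_x_mem k 1
    have hy := polar_y_mem k 1
    rw [XnPoly_one] at hx
    rw [YnPoly_one] at hy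
    rw [XnPoly_zero, YnPoly_zero]
    fin_cases i <;> simp_all
  · have hx := polar_x_mem k (m + 2)
    have hy := polar_y_mem k (m + 2)
    have hx' := polar_x_mem (k + 1) m
    have hy' := polar_y_mem (k + 1) m
    -- `z w ^ m = w ^ (m + 1) w̄` for `w = s + i t`, so `w ^ (m + 2) ± z w ^ m` is
    -- `2 s w ^ (m + 1)` or `2 i t w ^ (m + 1)`.
    fin_cases i
    · constructor <;> apply mem_polarSpan_of_two_mul
      · convert polarSpan.add_mem hx hx' using 1
        simp only [XnPoly_succ, YnPoly_succ, Fin.zero_eta]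
        ring
      · convert polarSpan.add_mem hy hy' using 1
        simp only [XnPoly_succ, YnPoly_succ, Fin.zero_eta]
        ring
    · constructor <;> apply mem_polarSpan_of_two_mul
      · convert polarSpan.sub_mem hy hy' using 1
        simp only [XnPoly_succ, YnPoly_succ, Fin.mk_one]
        ring
      · convert polarSpan.sub_mem hx' hx using 1
        simp only [XnPoly_succ, YnPoly_succ, Fin.mk_one]
        ring

lemma mem_polarSpan (f : MvPolynomial (Fin 2) ℝ) : f ∈ polarSpan := by
  induction f using MvPolynomial.induction_on with
  | C a =>
    have h := polarSpan.smul_mem a (polar_x_mem 0 0)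
    rwa [XnPoly_zero, pow_zero, one_mul, ← C_eq_smul_one] at h
  | add p q hp hq => exact polarSpan.add_mem hp hq
  | mul_X p i hp =>
    induction hp using Submodule.span_induction with
    | mem x hx =>
      obtain ⟨k, m, rfl | rfl⟩ := hx
      · exact (polar_mul_X_mem k m i).1
      · exact (polar_mul_X_mem k m i).2
    | zero => rw [zero_mul]; exact polarSpan.zero_mem
    | add x y _ _ hx hy => rw [add_mul]; exact polarSpan.add_mem hx hy
    | smul a x _ hx => rw [smul_mul_assoc]; exact polarSpan.smul_mem a hx

lemma rotAut_X0 (n : ℕ) : rotAut n (X 0) =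
    C (Real.cos (2 * π / n)) * X 0 + C (Real.sin (2 * π / n)) * X 1 := by
  simp [rotAut]

lemma rotAut_X1 (n : ℕ) : rotAut n (X 1) =
    - C (Real.sin (2 * π / n)) * X 0 + C (Real.cos (2 * π / n)) * X 1 := by
  simp [rotAut]

lemma C_cos_sq_add_C_sin_sq (θ : ℝ) :
    (C (Real.cos θ) ^ 2 + C (Real.sin θ) ^ 2 : MvPolynomial (Fin 2) ℝ) = 1 := by
  rw [← map_pow, ← map_pow, ← map_add, Real.cos_sq_add_sin_sq, map_one]

lemma rotAut_z (n : ℕ) :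
    rotAut n (X 0 ^ 2 + X 1 ^ 2) = X 0 ^ 2 + X 1 ^ 2 := by
  simp only [map_add, map_pow, rotAut_X0, rotAut_X1]
  linear_combination (X 0 ^ 2 + X 1 ^ 2) * C_cos_sq_add_C_sin_sq (2 * π / n)

/-- The rotation turns the plane spanned by `x_m` and `y_m` through the angle `2πm/n`. -/
lemma rotAut_polar (n m : ℕ) :
    rotAut n (XnPoly m) =
        C (Real.cos (m * (2 * π / n))) * XnPoly m + C (Real.sin (m * (2 * π / n))) * YnPoly m ∧
      rotAut n (YnPoly m) =
        - C (Real.sin (m * (2 * π / n))) * XnPoly m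
          + C (Real.cos (m * (2 * π / n))) * YnPoly m := by
  induction m with
  | zero => simp [XnPoly_zero, YnPoly_zero]
  | succ m ih =>
    obtain ⟨hx, hy⟩ := ih
    have ha : ((m + 1 : ℕ) : ℝ) * (2 * π / n) = m * (2 * π / n) + 2 * π / n := by
      push_cast; ring
    rw [ha, Real.cos_add, Real.sin_add]
    simp only [XnPoly_succ, YnPoly_succ, map_add, map_sub, map_mul, hx, hy, rotAut_X0, rotAut_X1]
    constructor <;> ring

lemma rotAut_iterate_X (n k : ℕ) :
    (rotAut n)^[k] (X 0) =
        C (Real.cos (k * (2 * π / n))) * X 0 + C (Real.sin (k * (2 * π / n))) * X 1 ∧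
      (rotAut n)^[k] (X 1) =
        - C (Real.sin (k * (2 * π / n))) * X 0 + C (Real.cos (k * (2 * π / n))) * X 1 := by
  induction k with
  | zero => simp
  | succ k ih =>
    obtain ⟨hx, hy⟩ := ih
    have ha : ((k + 1 : ℕ) : ℝ) * (2 * π / n) = k * (2 * π / n) + 2 * π / n := by
      push_cast; ring
    have hC : ∀ a : ℝ, rotAut n (C a) = C a := fun a => (rotAut n).commutes a
    rw [ha, Real.cos_add, Real.sin_add, Function.iterate_succ_apply', Function.iterate_succ_apply',
      hx, hy]
    simp only [map_add, map_sub, map_mul, map_neg, hC, rotAut_X0, rotAut_X1]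
    constructor <;> ring

lemma nat_mul_angle {n : ℕ} (hn : 1 ≤ n) : (n : ℝ) * (2 * π / n) = 2 * π := by
  have : (n : ℝ) ≠ 0 := by exact_mod_cast (by omega : n ≠ 0)
  field_simp

lemma rotAut_iterate_self {n : ℕ} (hn : 1 ≤ n) (h : MvPolynomial (Fin 2) ℝ) :
    (rotAut n)^[n] h = h := by
  have hid : (rotAut n) ^ n = AlgHom.id ℝ _ := by
    obtain ⟨h0, h1⟩ := rotAut_iterate_X n n
    rw [nat_mul_angle hn, Real.cos_two_pi, Real.sin_two_pi] at h0 h1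
    refine MvPolynomial.algHom_ext fun i => ?_
    rw [AlgHom.coe_pow]
    fin_cases i
    · simpa using h0
    · simpa using h1
  rw [← AlgHom.coe_pow, hid, AlgHom.id_apply]

/-- The algebra generated by `x_n`, `y_n` and `s² + t²`. -/
noncomputable abbrev genAlg (n : ℕ) : Subalgebra ℝ (MvPolynomial (Fin 2) ℝ) :=
  Algebra.adjoin ℝ
    ({XnPoly n, YnPoly n, X 0 ^ 2 + X 1 ^ 2} : Set (MvPolynomial (Fin 2) ℝ))

lemma polar_mul_mem_genAlg (n q : ℕ) :
    XnPoly (n * q) ∈ genAlg n ∧ YnPoly (n * q) ∈ genAlg n := by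
  have hx : XnPoly n ∈ genAlg n := Algebra.subset_adjoin (by simp)
  have hy : YnPoly n ∈ genAlg n := Algebra.subset_adjoin (by simp)
  induction q with
  | zero =>
    rw [mul_zero, XnPoly_zero, YnPoly_zero]
    exact ⟨one_mem _, zero_mem _⟩
  | succ q ih =>
    rw [Nat.mul_succ, XnPoly_add, YnPoly_add]
    exact ⟨sub_mem (mul_mem ih.1 hx) (mul_mem ih.2 hy),
      add_mem (mul_mem ih.1 hy) (mul_mem ih.2 hx)⟩

lemma dvd_of_cos_eq_one {n m : ℕ} (hn : 1 ≤ n) (h : Real.cos (m * (2 * π / n)) = 1) : n ∣ m := by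
  obtain ⟨k, hk⟩ := (Real.cos_eq_one_iff _).1 h
  have hn' : (n : ℝ) ≠ 0 := by exact_mod_cast (by omega : n ≠ 0)
  have hkm : (k * n : ℝ) = m := by
    have hpi := Real.pi_ne_zero
    field_simp at hk
    linarith
  have hkm' : k * (n : ℤ) = m := by exact_mod_cast hkm
  exact Int.natCast_dvd_natCast.1 ⟨k, by rw [← hkm', mul_comm]⟩

/-- If `n ∤ m`, then `σ - 1` is invertible on the plane spanned by `(s² + t²) ^ k x_m` and
`(s² + t²) ^ k y_m`. -/
lemma exists_rotAut_sub_eq {n m : ℕ} (k : ℕ) (hc : Real.cos (m * (2 * π / n)) ≠ 1) :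
    (∃ h, rotAut n h - h = (X 0 ^ 2 + X 1 ^ 2) ^ k * XnPoly m) ∧
      (∃ h, rotAut n h - h = (X 0 ^ 2 + X 1 ^ 2) ^ k * YnPoly m) := by
  obtain ⟨hx, hy⟩ := rotAut_polar n m
  have hC : ∀ a : ℝ, rotAut n (C a) = C a := fun a => (rotAut n).commutes a
  have hsq := Real.cos_sq_add_sin_sq (m * (2 * π / n))
  generalize Real.cos (m * (2 * π / n)) = c at *
  generalize Real.sin (m * (2 * π / n)) = s at *
  -- `(a, b)` is the first column of the inverse of `[[c - 1, -s], [s, c - 1]]`,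
  -- whose determinant is `2 - 2 c`.
  obtain ⟨a, b, h1, h2⟩ : ∃ a b : ℝ, a * (c - 1) - b * s = 1 ∧ a * s + b * (c - 1) = 0 := by
    have hd : 2 - 2 * c ≠ 0 := fun h => hc (by linarith)
    refine ⟨(c - 1) / (2 - 2 * c), -s / (2 - 2 * c), ?_, ?_⟩
    · field_simp
      linear_combination hsq
    · field_simp
      ring
  have h1' : (C a * (C c - 1) - C b * C s : MvPolynomial (Fin 2) ℝ) = 1 := by
    simpa using congrArg (C : ℝ → MvPolynomial (Fin 2) ℝ) h1
  have h2' : (C a * C s + C b * (C c - 1) : MvPolynomial (Fin 2) ℝ) = 0 := by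
    simpa using congrArg (C : ℝ → MvPolynomial (Fin 2) ℝ) h2
  refine ⟨⟨(X 0 ^ 2 + X 1 ^ 2) ^ k * (C a * XnPoly m + C b * YnPoly m), ?_⟩,
    ⟨(X 0 ^ 2 + X 1 ^ 2) ^ k * (C a * YnPoly m - C b * XnPoly m), ?_⟩⟩
  · rw [map_mul, map_pow, rotAut_z, map_add, map_mul, map_mul, hC, hC, hx, hy]
    linear_combination (X 0 ^ 2 + X 1 ^ 2) ^ k * (XnPoly m * h1' + YnPoly m * h2')
  · rw [map_mul, map_pow, rotAut_z, map_sub, map_mul, map_mul, hC, hC, hx, hy]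
    linear_combination (X 0 ^ 2 + X 1 ^ 2) ^ k * (YnPoly m * h1' - XnPoly m * h2')

/-- The decomposition `ℝ[s,t] = A + range (σ - 1)`. -/
lemma exists_decomp {n : ℕ} (hn : 1 ≤ n) (f : MvPolynomial (Fin 2) ℝ) :
    ∃ g ∈ genAlg n, ∃ h, f = g + (rotAut n h - h) := by
  have hf : f ∈ polarSpan := mem_polarSpan f
  induction hf using Submodule.span_induction with
  | mem x hx =>
    obtain ⟨k, m, hx⟩ := hx
    by_cases hc : Real.cos (m * (2 * π / n)) = 1
    · obtain ⟨q, rfl⟩ := dvd_of_cos_eq_one hn hc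
      obtain ⟨h1, h2⟩ := polar_mul_mem_genAlg n q
      have hz : (X 0 ^ 2 + X 1 ^ 2) ^ k ∈ genAlg n :=
        pow_mem (Algebra.subset_adjoin (by simp)) k
      refine ⟨x, ?_, 0, by simp⟩
      rcases hx with rfl | rfl
      · exact mul_mem hz h1
      · exact mul_mem hz h2
    · obtain ⟨⟨u, hu⟩, ⟨v, hv⟩⟩ := exists_rotAut_sub_eq k hc
      rcases hx with rfl | rfl
      · exact ⟨0, zero_mem _, u, by rw [hu, zero_add]⟩
      · exact ⟨0, zero_mem _, v, by rw [hv, zero_add]⟩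
  | zero => exact ⟨0, zero_mem _, 0, by simp⟩
  | add x y _ _ hx hy =>
    obtain ⟨g, hg, h, rfl⟩ := hx
    obtain ⟨g', hg', h', rfl⟩ := hy
    exact ⟨g + g', add_mem hg hg', h + h', by rw [map_add]; ring⟩
  | smul a x _ hx =>
    obtain ⟨g, hg, h, rfl⟩ := hx
    exact ⟨a • g, Subalgebra.smul_mem _ hg a, a • h, by rw [map_smul, smul_add, smul_sub]⟩

lemma rotAut_of_mem_genAlg {n : ℕ} (hn : 1 ≤ n) {f : MvPolynomial (Fin 2) ℝ}
    (hf : f ∈ genAlg n) : rotAut n f = f := by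
  have hle : genAlg n ≤ AlgHom.equalizer (rotAut n) (AlgHom.id ℝ _) := by
    obtain ⟨hx, hy⟩ := rotAut_polar n n
    rw [nat_mul_angle hn, Real.cos_two_pi, Real.sin_two_pi] at hx hy
    refine Algebra.adjoin_le ?_
    rintro p (rfl | rfl | rfl)
    · simpa using hx
    · simpa using hy
    · exact rotAut_z n
  exact hle hf

/-- The subalgebra of `ρ_{2π/n}`-invariant polynomials in `ℝ[s,t]` is generated by
`x_n`, `y_n` and `s² + t²`. -/
theorem invariants_eq_adjoin (n : ℕ) (hn : 1 ≤ n) (f : MvPolynomial (Fin 2) ℝ) :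
    rotAut n f = f ↔
      f ∈ Algebra.adjoin ℝ
        ({XnPoly n, YnPoly n, X 0 ^ 2 + X 1 ^ 2} : Set (MvPolynomial (Fin 2) ℝ)) := by
  refine ⟨fun hf => ?_, fun hf => rotAut_of_mem_genAlg hn hf⟩
  obtain ⟨g, hg, h, hfgh⟩ := exists_decomp hn f
  have hσg := rotAut_of_mem_genAlg hn hg
  have hstep : rotAut n h = h + (f - g) := by rw [hfgh]; ring
  have hiter : ∀ k : ℕ, (rotAut n)^[k] h = h + k • (f - g) := by
    intro k
    induction k with
    | zero => simp
    | succ k ih =>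
      rw [Function.iterate_succ_apply', ih, map_add, map_nsmul, map_sub, hf, hσg, hstep, succ_nsmul]
      ring
  have hzero : n • (f - g) = 0 := by
    have := hiter n
    rw [rotAut_iterate_self hn] at this
    exact left_eq_add.1 this
  have hfg : f = g := by
    rcases smul_eq_zero.1 hzero with h0 | h0
    · omega
    · exact sub_eq_zero.1 h0
  rw [hfg]
  exact hg
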